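/- Edges of a contact graph do not cross: let X be a finite set of unit vectors in ℝ³ with ψ := ψ(X) ∈ (0, π), and let x, y, z, w ∈ X be four distinct points with d(x,y) = d(z,w) = ψ. Then the geodesic arcs A₁ := { (sin((1−t)ψ)·x + sin(tψ)·y)/sin(ψ) : t ∈ [0,1] } and A₂ := { (sin((1−t)ψ)·z + sin(tψ)·w)/sin(ψ) : t ∈ [0,1] } are disjoint. -/

import Mathlib

open scoped RealInnerProductSpace

noncomputable section

/-- Euclidean 3-space. -/
abbrev E3 := EuclideanSpace ℝ (Fin 3)

/-- Geodesic distance between unit vectors on the sphere. -/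
def gdist (x y : E3) : ℝ := Real.arccos ⟪x, y⟫

/-- The minimum geodesic distance among distinct points of a finite set. -/
def psi (X : Finset E3) : ℝ :=
  sInf {r : ℝ | ∃ x ∈ X, ∃ y ∈ X, x ≠ y ∧ r = gdist x y}

/-- The unit tangent vector at `x` pointing toward `y`. -/
def tang (x y : E3) : E3 := ‖y - ⟪x, y⟫ • x‖⁻¹ • (y - ⟪x, y⟫ • x)

/-- The spherical angle `∠(y, x, z)` at the vertex `x` between `y` and `z`. -/
def ang (y x z : E3) : ℝ := Real.arccos ⟪tang x y, tang x z⟫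

/-!
Two arcs that meet do so at a unit vector `p = a • x + b • y = a' • z + b' • w` with nonnegative
coefficients. Let `c` be the cosine of the edge length. Expanding `‖p‖ ^ 2` along one edge gives at
least `c * (a + b) ^ 2 + (1 - c) * (a ^ 2 + b ^ 2)`, and likewise along the other, while expanding
it across the two edges gives at most `c * ((a + b) * (a' + b'))`. For `c ≤ 0` the upper bound is
nonpositive; for `c > 0` it is at most the mean of `c * (a + b) ^ 2` and `c * (a' + b') ^ 2`, so
the lower bounds force the coefficients to vanish. Either way `p = 0`, which is not a unit vector.
-/

section InnerProductSpace

open Real InnerProductGeometry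

variable {E : Type*} [NormedAddCommGroup E] [InnerProductSpace ℝ E] {x y z w p : E}
  {a b a' b' c θ : ℝ}

theorem norm_smul_add_smul_sq (hx : ‖x‖ = 1) (hy : ‖y‖ = 1) (a b : ℝ) :
    ‖a • x + b • y‖ ^ 2 = a ^ 2 + 2 * (a * b) * ⟪x, y⟫ + b ^ 2 := by
  rw [norm_add_sq_real, norm_smul, norm_smul, hx, hy, mul_one, mul_one, norm_eq_abs, norm_eq_abs,
    sq_abs, sq_abs, real_inner_smul_left, real_inner_smul_right]
  ring

theorem le_norm_smul_add_smul_sq (hx : ‖x‖ = 1) (hy : ‖y‖ = 1) (hxy : c ≤ ⟪x, y⟫)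
    (ha : 0 ≤ a) (hb : 0 ≤ b) :
    c * (a + b) ^ 2 + (1 - c) * (a ^ 2 + b ^ 2) ≤ ‖a • x + b • y‖ ^ 2 :=
  calc c * (a + b) ^ 2 + (1 - c) * (a ^ 2 + b ^ 2) = a ^ 2 + 2 * (a * b) * c + b ^ 2 := by ring
    _ ≤ a ^ 2 + 2 * (a * b) * ⟪x, y⟫ + b ^ 2 := by gcongr
    _ = ‖a • x + b • y‖ ^ 2 := (norm_smul_add_smul_sq hx hy a b).symm

theorem inner_smul_add_smul_le (hxz : ⟪x, z⟫ ≤ c) (hxw : ⟪x, w⟫ ≤ c) (hyz : ⟪y, z⟫ ≤ c)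
    (hyw : ⟪y, w⟫ ≤ c) (ha : 0 ≤ a) (hb : 0 ≤ b) (ha' : 0 ≤ a') (hb' : 0 ≤ b') :
    ⟪a • x + b • y, a' • z + b' • w⟫ ≤ c * ((a + b) * (a' + b')) :=
  calc ⟪a • x + b • y, a' • z + b' • w⟫
      = a * a' * ⟪x, z⟫ + a * b' * ⟪x, w⟫ + b * a' * ⟪y, z⟫ + b * b' * ⟪y, w⟫ := by
        simp only [inner_add_left, inner_add_right, real_inner_smul_left, real_inner_smul_right]
        ring
    _ ≤ a * a' * c + a * b' * c + b * a' * c + b * b' * c := by gcongr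
    _ = c * ((a + b) * (a' + b')) := by ring

theorem smul_add_smul_eq_zero_of_eq_smul_add_smul
    (hx : ‖x‖ = 1) (hy : ‖y‖ = 1) (hz : ‖z‖ = 1) (hw : ‖w‖ = 1) (hc : c < 1)
    (hxy : c ≤ ⟪x, y⟫) (hzw : c ≤ ⟪z, w⟫)
    (hxz : ⟪x, z⟫ ≤ c) (hxw : ⟪x, w⟫ ≤ c) (hyz : ⟪y, z⟫ ≤ c) (hyw : ⟪y, w⟫ ≤ c)
    (ha : 0 ≤ a) (hb : 0 ≤ b) (ha' : 0 ≤ a') (hb' : 0 ≤ b')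
    (h : a • x + b • y = a' • z + b' • w) : a • x + b • y = 0 := by
  have upper : ‖a • x + b • y‖ ^ 2 ≤ c * ((a + b) * (a' + b')) := by
    rw [← real_inner_self_eq_norm_sq]
    nth_rw 2 [h]
    exact inner_smul_add_smul_le hxz hxw hyz hyw ha hb ha' hb'
  rcases le_or_gt c 0 with hc0 | hc0
  · have norm_sq_nonpos : ‖a • x + b • y‖ ^ 2 ≤ 0 :=
      upper.trans (mul_nonpos_of_nonpos_of_nonneg hc0 (by positivity))
    exact norm_eq_zero.1 (pow_eq_zero_iff two_ne_zero |>.1 (norm_sq_nonpos.antisymm (sq_nonneg _)))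
  · have lower := le_norm_smul_add_smul_sq hx hy hxy ha hb
    have lower' := le_norm_smul_add_smul_sq hz hw hzw ha' hb'
    rw [← h] at lower'
    have amgm : 0 ≤ c * ((a + b) - (a' + b')) ^ 2 := by positivity
    have coeff_nonneg' : 0 ≤ (1 - c) * (a' ^ 2 + b' ^ 2) :=
      mul_nonneg (sub_pos.2 hc).le (by positivity)
    have coeff_nonpos : a ^ 2 + b ^ 2 ≤ 0 :=
      nonpos_of_mul_nonpos_right (by linarith) (sub_pos.2 hc)
    have ha0 : a = 0 := by nlinarith
    have hb0 : b = 0 := by nlinarith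
    rw [ha0, hb0, zero_smul, zero_smul, add_zero]

theorem cos_le_inner_of_angle_le (hx : ‖x‖ = 1) (hy : ‖y‖ = 1) (hθπ : θ ≤ π)
    (hxy : angle x y ≤ θ) : cos θ ≤ ⟪x, y⟫ := by
  rw [inner_eq_cos_angle_of_norm_eq_one hx hy]
  exact cos_le_cos_of_nonneg_of_le_pi (angle_nonneg x y) hθπ hxy

theorem inner_le_cos_of_le_angle (hx : ‖x‖ = 1) (hy : ‖y‖ = 1) (hθ0 : 0 ≤ θ)
    (hxy : θ ≤ angle x y) : ⟪x, y⟫ ≤ cos θ := by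
  rw [inner_eq_cos_angle_of_norm_eq_one hx hy]
  exact cos_le_cos_of_nonneg_of_le_pi hθ0 (angle_le_pi x y) hxy

theorem angle_lt_pi_of_le_angle (hxy : angle x y ≤ θ) (hxz : θ ≤ angle x z)
    (hyz : θ ≤ angle y z) : angle x y < π := by
  refine (angle_le_pi x y).lt_of_ne fun hπ ↦ ?_
  have := angle_add_angle_eq_pi_of_angle_eq_pi z hπ
  linarith [pi_pos]

theorem sin_angle_ne_zero (hx : ‖x‖ = 1) (hy : ‖y‖ = 1) (hxy : x ≠ y) (hπ : angle x y < π) :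
    sin (angle x y) ≠ 0 := by
  rw [Ne, sin_eq_zero_iff_angle_eq_zero_or_angle_eq_pi, not_or, ← cos_eq_one_iff_angle_eq_zero,
    ← inner_eq_cos_angle_of_norm_eq_one hx hy, inner_eq_one_iff_of_norm_eq_one hx hy]
  exact ⟨hxy, hπ.ne⟩

theorem sin_add_sq (α β : ℝ) :
    sin (α + β) ^ 2 = sin α ^ 2 + 2 * (sin α * sin β) * cos (α + β) + sin β ^ 2 := by
  rw [sin_add, cos_add]
  linear_combination sin α ^ 2 * sin_sq_add_cos_sq β + sin β ^ 2 * sin_sq_add_cos_sq α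

/-- The minimizing geodesic arc on the unit sphere between the unit vectors `x` and `y`, in its
constant-speed parametrization. For `y = x` and `y = -x` the factor `(sin (angle x y))⁻¹` is
`0⁻¹ = 0`, so the set is `{0}`. -/
def geodesicArc (x y : E) : Set E :=
  (fun t : ℝ ↦ (sin (angle x y))⁻¹ •
    (sin ((1 - t) * angle x y) • x + sin (t * angle x y) • y)) '' Set.Icc 0 1

theorem norm_eq_one_of_mem_geodesicArc (hx : ‖x‖ = 1) (hy : ‖y‖ = 1)
    (hsin : sin (angle x y) ≠ 0) (hp : p ∈ geodesicArc x y) : ‖p‖ = 1 := by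
  obtain ⟨t, -, rfl⟩ := hp
  have norm_sq : ‖sin ((1 - t) * angle x y) • x + sin (t * angle x y) • y‖ ^ 2 =
      ‖sin (angle x y)‖ ^ 2 := by
    have sin_sq := sin_add_sq ((1 - t) * angle x y) (t * angle x y)
    rw [← add_mul, sub_add_cancel, one_mul] at sin_sq
    rw [norm_smul_add_smul_sq hx hy, inner_eq_cos_angle_of_norm_eq_one hx hy, norm_eq_abs,
      sq_abs, sin_sq]
  rw [norm_smul, norm_inv, (sq_eq_sq₀ (norm_nonneg _) (norm_nonneg _)).1 norm_sq,
    inv_mul_cancel₀ (norm_ne_zero_iff.2 hsin)]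

theorem exists_nonneg_of_mem_geodesicArc (hp : p ∈ geodesicArc x y) :
    ∃ a b : ℝ, 0 ≤ a ∧ 0 ≤ b ∧ p = a • x + b • y := by
  obtain ⟨t, ⟨ht0, ht1⟩, rfl⟩ := hp
  have sin_mul_nonneg : ∀ s : ℝ, 0 ≤ s → s ≤ 1 → 0 ≤ sin (s * angle x y) := fun s hs0 hs1 ↦
    sin_nonneg_of_nonneg_of_le_pi (mul_nonneg hs0 (angle_nonneg x y))
      ((mul_le_of_le_one_left (angle_nonneg x y) hs1).trans (angle_le_pi x y))
  have inv_sin_nonneg : 0 ≤ (sin (angle x y))⁻¹ := inv_nonneg.2 (sin_angle_nonneg x y)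
  refine ⟨_, _, mul_nonneg inv_sin_nonneg (sin_mul_nonneg (1 - t) (by linarith) (by linarith)),
    mul_nonneg inv_sin_nonneg (sin_mul_nonneg t ht0 ht1), ?_⟩
  simp only [smul_add, smul_smul]

theorem contact_edges_disjoint_general
    (hx : ‖x‖ = 1) (hy : ‖y‖ = 1) (hz : ‖z‖ = 1) (hw : ‖w‖ = 1) (hxy : x ≠ y) (hzw : z ≠ w)
    (hθxy : angle x y ≤ θ) (hθzw : angle z w ≤ θ)
    (hθxz : θ ≤ angle x z) (hθxw : θ ≤ angle x w) (hθyz : θ ≤ angle y z) (hθyw : θ ≤ angle y w) :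
    Disjoint (geodesicArc x y) (geodesicArc z w) := by
  have hθ0 : 0 ≤ θ := (angle_nonneg x y).trans hθxy
  have hθπ : θ ≤ π := hθxz.trans (angle_le_pi x z)
  have cos_le_inner_zw : cos θ ≤ ⟪z, w⟫ := cos_le_inner_of_angle_le hz hw hθπ hθzw
  have cos_lt_one : cos θ < 1 :=
    cos_le_inner_zw.trans_lt ((inner_lt_one_iff_real_of_norm_eq_one hz hw).2 hzw)
  refine Set.disjoint_left.2 fun p hp hp' ↦ ?_
  have norm_p : ‖p‖ = 1 := norm_eq_one_of_mem_geodesicArc hx hy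
    (sin_angle_ne_zero hx hy hxy (angle_lt_pi_of_le_angle hθxy hθxz hθyz)) hp
  obtain ⟨a, b, ha, hb, rfl⟩ := exists_nonneg_of_mem_geodesicArc hp
  obtain ⟨a', b', ha', hb', h⟩ := exists_nonneg_of_mem_geodesicArc hp'
  refine norm_ne_zero_iff.1 (norm_p.trans_ne one_ne_zero) ?_
  exact smul_add_smul_eq_zero_of_eq_smul_add_smul hx hy hz hw cos_lt_one
    (cos_le_inner_of_angle_le hx hy hθπ hθxy) cos_le_inner_zw
    (inner_le_cos_of_le_angle hx hz hθ0 hθxz) (inner_le_cos_of_le_angle hx hw hθ0 hθxw)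
    (inner_le_cos_of_le_angle hy hz hθ0 hθyz) (inner_le_cos_of_le_angle hy hw hθ0 hθyw)
    ha hb ha' hb' h

end InnerProductSpace

open InnerProductGeometry

theorem gdist_eq_angle {x y : E3} (hx : ‖x‖ = 1) (hy : ‖y‖ = 1) : gdist x y = angle x y := by
  rw [gdist, angle, hx, hy, mul_one, div_one]

theorem psi_le_gdist {X : Finset E3} {x y : E3} (hx : x ∈ X) (hy : y ∈ X) (hxy : x ≠ y) :
    psi X ≤ gdist x y := by
  refine csInf_le ⟨0, ?_⟩ ⟨x, hx, y, hy, hxy, rfl⟩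
  rintro _ ⟨u, -, v, -, -, rfl⟩
  exact Real.arccos_nonneg _

theorem psi_le_angle {X : Finset E3} (hu : ∀ x ∈ X, ‖x‖ = 1) {x y : E3} (hx : x ∈ X)
    (hy : y ∈ X) (hxy : x ≠ y) : psi X ≤ angle x y :=
  gdist_eq_angle (hu x hx) (hu y hy) ▸ psi_le_gdist hx hy hxy

/-- Edges of a contact graph do not cross: minimizing geodesic arcs between two
disjoint contact pairs are disjoint. -/
theorem contact_edges_disjoint {π : ℝ} (X : Finset E3) (hu : ∀ x ∈ X, ‖x‖ = 1)
    (hψ0 : 0 < psi X) (hψπ : psi X < π)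
    (x y z w : E3) (hx : x ∈ X) (hy : y ∈ X) (hz : z ∈ X) (hw : w ∈ X)
    (hxy : x ≠ y) (hxz : x ≠ z) (hxw : x ≠ w)
    (hyz : y ≠ z) (hyw : y ≠ w) (hzw : z ≠ w)
    (hdxy : gdist x y = psi X) (hdzw : gdist z w = psi X) :
    Disjoint
      ((fun t : ℝ => (Real.sin (psi X))⁻¹ •
        (Real.sin ((1 - t) * psi X) • x + Real.sin (t * psi X) • y)) '' Set.Icc 0 1)
      ((fun t : ℝ => (Real.sin (psi X))⁻¹ •
        (Real.sin ((1 - t) * psi X) • z + Real.sin (t * psi X) • w)) '' Set.Icc 0 1) := by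
  have angle_xy : angle x y = psi X := gdist_eq_angle (hu x hx) (hu y hy) ▸ hdxy
  have angle_zw : angle z w = psi X := gdist_eq_angle (hu z hz) (hu w hw) ▸ hdzw
  simpa only [geodesicArc, angle_xy, angle_zw] using
    contact_edges_disjoint_general (hu x hx) (hu y hy) (hu z hz) (hu w hw) hxy hzw
      angle_xy.le angle_zw.le (psi_le_angle hu hx hz hxz) (psi_le_angle hu hx hw hxw)
      (psi_le_angle hu hy hz hyz) (psi_le_angle hu hy hw hyw)
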